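/- Let γ > 0 and δ > 0. There exists a constant c(γ, δ) > 0, depending only on γ and δ, such that for every integer n ≥ 2 with γ·ln n < n the following holds: if ξ is a random vector distributed according to the uniform probability measure on the Euclidean unit sphere S^{4n−1} ⊂ ℝ^{4n}, then Prob{ ξ₁ ≥ √(γ·ln n / n) } ≥ c(γ, δ) / ( n^{(2 + δ + δ²/2)·γ} · √(ln n) ), where ξ₁ denotes the first coordinate of ξ. -/

import Mathlib

open MeasureTheory

/-!
Averaging over rotations shows that the uniform measure on the sphere and the standard Gaussian
measure give the same mass to every cone `{x | t ‖x‖ < ⟪u, x⟫}`. Under the Gaussian measure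
`⟪u, x⟫` is a standard normal variable independent of the projection `y` of `x` onto the
orthogonal complement of `u`. In dimension `d`, Markov's inequality gives `‖y‖² ≤ r d` with
probability at least `1 - 1/r`, and then `x` lies in the cone as soon as
`⟪u, x⟫² > r d t² / (1 - t²)`. Up to constants a cap thus has mass at least
`exp (-r² d t² / (2 (1 - t²)))` for each `r > 1`. For `d = 4 n` and `t² = γ ln n / n` this is
`n ^ (-2 r² γ (1 + o(1)))`, and the slack `δ + δ² / 2` in the exponent absorbs both `r²` and the
`o(1)`.
-/

open Filter Module ProbabilityTheory Real
open scoped InnerProductSpace Topology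

/-- The uniform probability measure on the unit sphere of `E`, encoded as a measure on the whole
space which is carried by the sphere and invariant under all linear isometries. -/
structure IsUniformOnUnitSphere {E : Type*} [NormedAddCommGroup E] [InnerProductSpace ℝ E]
    [MeasurableSpace E] (μ : Measure E) : Prop extends IsProbabilityMeasure μ where
  measure_sphere : μ (Metric.sphere 0 1) = 1
  map_linearIsometryEquiv (T : E ≃ₗᵢ[ℝ] E) : μ.map T = μ

namespace IsUniformOnUnitSphere

variable {E : Type*} [NormedAddCommGroup E] [InnerProductSpace ℝ E] [MeasurableSpace E]
  [BorelSpace E] {μ : Measure E}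

lemma ae_norm_eq_one (hμ : IsUniformOnUnitSphere μ) : ∀ᵐ x ∂μ, ‖x‖ = 1 := by
  have := hμ.toIsProbabilityMeasure
  filter_upwards [(mem_ae_iff_prob_eq_one Metric.isClosed_sphere.measurableSet).mpr
    hμ.measure_sphere] with x hx
  simpa using hx

lemma measure_compl_zero (hμ : IsUniformOnUnitSphere μ) : μ {0}ᶜ = 1 := by
  have := hμ.toIsProbabilityMeasure
  rw [← mem_ae_iff_prob_eq_one (measurableSet_singleton 0).compl]
  filter_upwards [hμ.ae_norm_eq_one] with x hx
  exact ne_zero_of_norm_ne_zero (hx.trans_ne one_ne_zero)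

end IsUniformOnUnitSphere

section Cone

variable {E : Type*} [NormedAddCommGroup E] [InnerProductSpace ℝ E]

/-- The open cone of the vectors whose angle with the axis `u` has cosine larger than `t`. The
normalisation by `‖u‖` makes the relation `x ∈ openCone t u` symmetric in `x` and `u`. -/
def openCone (t : ℝ) (u : E) : Set E := {x | t * (‖u‖ * ‖x‖) < ⟪u, x⟫_ℝ}

lemma mem_openCone_comm {t : ℝ} {u x : E} : x ∈ openCone t u ↔ u ∈ openCone t x := by
  simp only [openCone, Set.mem_ofPred_eq, mul_comm ‖u‖, real_inner_comm]

lemma openCone_zero (t : ℝ) : openCone t (0 : E) = ∅ := by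
  simp [openCone]

lemma openCone_smul (t : ℝ) {c : ℝ} (hc : 0 < c) (u : E) : openCone t (c • u) = openCone t u := by
  ext x
  simp only [openCone, Set.mem_ofPred_eq, norm_smul, norm_of_nonneg hc.le, real_inner_smul_left,
    mul_assoc, mul_left_comm t c, mul_lt_mul_iff_right₀ hc]

lemma preimage_openCone (t : ℝ) (T : E ≃ₗᵢ[ℝ] E) (u : E) :
    T ⁻¹' openCone t (T u) = openCone t u := by
  simp [openCone]

lemma norm_sq_eq_inner_sq_add_norm_sq_starProjection_orthogonal {u : E} (hu : ‖u‖ = 1) (x : E) :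
    ‖x‖ ^ 2 = ⟪u, x⟫_ℝ ^ 2 + ‖(ℝ ∙ u)ᗮ.starProjection x‖ ^ 2 := by
  rw [Submodule.norm_sq_eq_add_norm_sq_starProjection x (ℝ ∙ u),
    Submodule.starProjection_unit_singleton ℝ hu, norm_smul, hu, mul_one, norm_eq_abs, sq_abs]

lemma mem_openCone_of_sqrt_lt_inner {u x : E} (hu : ‖u‖ = 1) {t M : ℝ} (ht0 : 0 ≤ t) (ht1 : t < 1)
    (hx : √(t ^ 2 / (1 - t ^ 2) * M) < ⟪u, x⟫_ℝ)
    (hM : ‖(ℝ ∙ u)ᗮ.starProjection x‖ ^ 2 ≤ M) : x ∈ openCone t u := by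
  have ht : 0 < 1 - t ^ 2 := by nlinarith
  have hinner : 0 < ⟪u, x⟫_ℝ := (sqrt_nonneg _).trans_lt hx
  have hsq : t ^ 2 * M < ⟪u, x⟫_ℝ ^ 2 * (1 - t ^ 2) := by
    rwa [sqrt_lt' hinner, div_mul_eq_mul_div, div_lt_iff₀ ht] at hx
  refine lt_of_pow_lt_pow_left₀ 2 hinner.le ?_
  calc (t * (‖u‖ * ‖x‖)) ^ 2
      = t ^ 2 * (⟪u, x⟫_ℝ ^ 2 + ‖(ℝ ∙ u)ᗮ.starProjection x‖ ^ 2) := by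
        rw [hu, one_mul, mul_pow, norm_sq_eq_inner_sq_add_norm_sq_starProjection_orthogonal hu]
    _ ≤ t ^ 2 * (⟪u, x⟫_ℝ ^ 2 + M) := by gcongr
    _ < ⟪u, x⟫_ℝ ^ 2 := by linarith

variable [MeasurableSpace E] [BorelSpace E]

lemma measurableSet_openCone (t : ℝ) (u : E) : MeasurableSet (openCone t u) :=
  measurableSet_lt (by fun_prop) (by fun_prop)

lemma measure_openCone_eq {ν : Measure E} (hν : ∀ T : E ≃ₗᵢ[ℝ] E, ν.map T = ν) (t : ℝ) {u v : E}
    (hu : u ≠ 0) (hv : v ≠ 0) : ν (openCone t u) = ν (openCone t v) := by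
  have hc : 0 < ‖u‖ / ‖v‖ := by positivity
  let T := (ℝ ∙ (u - (‖u‖ / ‖v‖) • v))ᗮ.reflection
  have hT : T u = (‖u‖ / ‖v‖) • v := Submodule.reflection_sub <| by
    rw [norm_smul, norm_of_nonneg hc.le, div_mul_cancel₀ _ (norm_ne_zero_iff.mpr hv)]
  rw [← openCone_smul t hc v, ← hT, ← preimage_openCone t T u,
    ← Measure.map_apply (by fun_prop) (measurableSet_openCone t _), hν]

lemma lintegral_measure_openCone {μ ν : Measure E} (hν : ∀ T : E ≃ₗᵢ[ℝ] E, ν.map T = ν) (t : ℝ)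
    {u : E} (hu : u ≠ 0) :
    ∫⁻ x, ν (openCone t x) ∂μ = ν (openCone t u) * μ {0}ᶜ := by
  rw [← lintegral_indicator_const (measurableSet_singleton 0).compl]
  congr with x
  rcases eq_or_ne x 0 with rfl | hx
  · simp [openCone_zero]
  · simp [hx, measure_openCone_eq hν t hx hu]

-- Fubini for the symmetric relation `x ∈ openCone t y`, integrated against `μ.prod ν`.
lemma measure_openCone_mul_comm [SecondCountableTopology E] {μ ν : Measure E} [SFinite μ]
    [SFinite ν] (hμ : ∀ T : E ≃ₗᵢ[ℝ] E, μ.map T = μ) (hν : ∀ T : E ≃ₗᵢ[ℝ] E, ν.map T = ν) (t : ℝ)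
    {u : E} (hu : u ≠ 0) :
    ν (openCone t u) * μ {0}ᶜ = μ (openCone t u) * ν {0}ᶜ := by
  have hmeas : MeasurableSet {p : E × E | t * (‖p.1‖ * ‖p.2‖) < ⟪p.1, p.2⟫_ℝ} :=
    measurableSet_lt (by fun_prop) (by fun_prop)
  calc ν (openCone t u) * μ {0}ᶜ
      = ∫⁻ x, ν (openCone t x) ∂μ := (lintegral_measure_openCone hν t hu).symm
    _ = μ.prod ν {p | p.2 ∈ openCone t p.1} := (Measure.prod_apply hmeas).symm
    _ = ∫⁻ y, μ {x | y ∈ openCone t x} ∂ν := Measure.prod_apply_symm hmeas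
    _ = ∫⁻ y, μ (openCone t y) ∂ν := by simp_rw [mem_openCone_comm, Set.ofPred_mem_eq]
    _ = μ (openCone t u) * ν {0}ᶜ := lintegral_measure_openCone hμ t hu

end Cone

section Gaussian

lemma one_sub_integral_div_le_measureReal_le {Ω : Type*} [MeasurableSpace Ω] {P : Measure Ω}
    [IsProbabilityMeasure P] {f : Ω → ℝ} (hf : 0 ≤ᵐ[P] f) (hint : Integrable f P) {M : ℝ}
    (hM : 0 < M) : 1 - (∫ ω, f ω ∂P) / M ≤ P.real {ω | f ω ≤ M} := by
  have hmarkov : P.real {ω | M ≤ f ω} ≤ (∫ ω, f ω ∂P) / M := by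
    rw [le_div_iff₀' hM]
    exact mul_meas_ge_le_integral_of_nonneg hf hint M
  have hcover : 1 ≤ P.real {ω | f ω ≤ M} + P.real {ω | M ≤ f ω} := by
    rw [← probReal_univ (μ := P),
      ← Set.eq_univ_of_forall (s := {ω | f ω ≤ M} ∪ {ω | M ≤ f ω}) fun ω ↦ le_total (f ω) M]
    exact measureReal_union_le _ _
  linarith

lemma gaussianPDFReal_add_one_le_measureReal_Ioi {m a : ℝ} {v : NNReal} (hv : v ≠ 0)
    (ha : m ≤ a) : gaussianPDFReal m v (a + 1) ≤ (gaussianReal m v).real (Set.Ioi a) := by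
  have hanti : ∀ x ∈ Set.Ioc a (a + 1), gaussianPDFReal m v (a + 1) ≤ gaussianPDFReal m v x := by
    intro x hx
    have : 0 ≤ x - m := by linarith [hx.1]
    unfold gaussianPDFReal
    gcongr
    exact hx.2
  have hIoc : (gaussianReal m v).real (Set.Ioc a (a + 1)) =
      ∫ x in Set.Ioc a (a + 1), gaussianPDFReal m v x := by
    rw [measureReal_def, gaussianReal_apply_eq_integral m hv,
      ENNReal.toReal_ofReal (integral_nonneg fun x ↦ gaussianPDFReal_nonneg m v x)]
  calc gaussianPDFReal m v (a + 1)
      ≤ ∫ x in Set.Ioc a (a + 1), gaussianPDFReal m v x := by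
        simpa using setIntegral_ge_of_const_le_real measurableSet_Ioc (by simp) hanti
          (integrable_gaussianPDFReal m v).integrableOn
    _ = (gaussianReal m v).real (Set.Ioc a (a + 1)) := hIoc.symm
    _ ≤ (gaussianReal m v).real (Set.Ioi a) := measureReal_mono Set.Ioc_subset_Ioi_self

variable {E : Type*} [NormedAddCommGroup E] [InnerProductSpace ℝ E] [FiniteDimensional ℝ E]
  [MeasurableSpace E] [BorelSpace E]

lemma map_inner_stdGaussian {u : E} (hu : ‖u‖ = 1) :
    (stdGaussian E).map (fun x ↦ ⟪u, x⟫_ℝ) = gaussianReal 0 1 := by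
  have h := IsGaussian.map_eq_gaussianReal (μ := stdGaussian E) (innerSL ℝ u)
  rwa [integral_strongDual_stdGaussian, variance_dual_stdGaussian, innerSL_apply_norm, hu,
    one_pow, Real.toNNReal_one] at h

lemma integral_norm_sq_stdGaussian : ∫ x, ‖x‖ ^ 2 ∂stdGaussian E = finrank ℝ E := by
  let b := stdOrthonormalBasis ℝ E
  have hcoord (i) : ∫ x, ⟪b i, x⟫_ℝ ^ 2 ∂stdGaussian E = 1 := by
    have h := variance_dual_stdGaussian (innerSL ℝ (b i))
    rwa [variance_of_integral_eq_zero (by fun_prop) (integral_strongDual_stdGaussian _),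
      innerSL_apply_norm, b.norm_eq_one, one_pow] at h
  have hint (i) : Integrable (fun x ↦ ⟪b i, x⟫_ℝ ^ 2) (stdGaussian E) :=
    (IsGaussian.memLp_two_id.const_inner (b i)).integrable_sq
  simp_rw [← b.sum_sq_inner_right]
  rw [integral_finsetSum _ fun i _ ↦ hint i]
  simp [hcoord]

lemma indepFun_stdGaussian_of_comp_adjoint_eq_zero {F G : Type*}
    [NormedAddCommGroup F] [InnerProductSpace ℝ F] [CompleteSpace F] [MeasurableSpace F]
    [BorelSpace F] [SecondCountableTopology F]
    [NormedAddCommGroup G] [InnerProductSpace ℝ G] [CompleteSpace G] [MeasurableSpace G]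
    [BorelSpace G] [SecondCountableTopology G]
    {L₁ : E →L[ℝ] F} {L₂ : E →L[ℝ] G} (h : L₁ ∘L L₂.adjoint = 0) :
    IndepFun L₁ L₂ (stdGaussian E) := by
  refine ((IsGaussian.hasGaussianLaw_id (μ := stdGaussian E)).map
    (L₁.prod L₂)).indepFun_of_covariance_inner fun x y ↦ ?_
  calc cov[fun g ↦ ⟪x, L₁ g⟫_ℝ, fun g ↦ ⟪y, L₂ g⟫_ℝ; stdGaussian E]
      = covarianceBilin (stdGaussian E) (L₁.adjoint x) (L₂.adjoint y) := by
        simp_rw [covarianceBilin_apply_eq_cov IsGaussian.memLp_two_id,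
          ContinuousLinearMap.adjoint_inner_left]
    _ = ⟪x, (L₁ ∘L L₂.adjoint) y⟫_ℝ := by
        rw [covarianceBilin_stdGaussian, innerSL_apply_apply,
          ContinuousLinearMap.adjoint_inner_left, ContinuousLinearMap.comp_apply]
    _ = 0 := by simp [h]

lemma indepFun_inner_starProjection_orthogonal_stdGaussian (u : E) :
    IndepFun (fun x ↦ ⟪u, x⟫_ℝ) (ℝ ∙ u)ᗮ.starProjection (stdGaussian E) := by
  refine indepFun_stdGaussian_of_comp_adjoint_eq_zero (L₁ := innerSL ℝ u) ?_
  ext x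
  rw [(isSelfAdjoint_starProjection _).adjoint_eq]
  exact Submodule.mem_orthogonal_singleton_iff_inner_right.mp
    (Submodule.starProjection_apply_mem (ℝ ∙ u)ᗮ x)

lemma one_sub_finrank_div_le_stdGaussian_norm_sq_le {M : ℝ} (hM : 0 < M) :
    1 - finrank ℝ E / M ≤ (stdGaussian E).real {x | ‖x‖ ^ 2 ≤ M} := by
  rw [← integral_norm_sq_stdGaussian]
  exact one_sub_integral_div_le_measureReal_le (.of_forall fun x ↦ by positivity)
    IsGaussian.memLp_two_id.integrable_norm_pow' hM

lemma gaussianReal_Ioi_mul_le_stdGaussian_openCone {u : E} (hu : ‖u‖ = 1) {t M : ℝ} (ht0 : 0 ≤ t)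
    (ht1 : t < 1) (hM : 0 < M) :
    (gaussianReal 0 1).real (Set.Ioi √(t ^ 2 / (1 - t ^ 2) * M)) * (1 - finrank ℝ E / M) ≤
      (stdGaussian E).real (openCone t u) := by
  set a := √(t ^ 2 / (1 - t ^ 2) * M)
  let P := (ℝ ∙ u)ᗮ.starProjection
  have hindep :=
    (indepFun_inner_starProjection_orthogonal_stdGaussian u).measure_inter_preimage_eq_mul
      (Set.Ioi a) {y | ‖y‖ ^ 2 ≤ M} measurableSet_Ioi (measurableSet_le (by fun_prop) (by fun_prop))
  have htail : (gaussianReal 0 1).real (Set.Ioi a) =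
      (stdGaussian E).real ((fun x ↦ ⟪u, x⟫_ℝ) ⁻¹' Set.Ioi a) := by
    rw [← map_inner_stdGaussian hu, map_measureReal_apply (by fun_prop) measurableSet_Ioi]
  have hnorm : 1 - finrank ℝ E / M ≤ (stdGaussian E).real (P ⁻¹' {y | ‖y‖ ^ 2 ≤ M}) := by
    refine (one_sub_finrank_div_le_stdGaussian_norm_sq_le hM).trans (measureReal_mono fun x hx ↦ ?_)
    exact (pow_le_pow_left₀ (norm_nonneg _) (Submodule.norm_starProjection_apply_le _ x) 2).trans hx
  calc _ ≤ (stdGaussian E).real ((fun x ↦ ⟪u, x⟫_ℝ) ⁻¹' Set.Ioi a) *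
        (stdGaussian E).real (P ⁻¹' {y | ‖y‖ ^ 2 ≤ M}) := by rw [htail]; gcongr
    _ = (stdGaussian E).real ((fun x ↦ ⟪u, x⟫_ℝ) ⁻¹' Set.Ioi a ∩ P ⁻¹' {y | ‖y‖ ^ 2 ≤ M}) := by
        simp only [measureReal_def, ← ENNReal.toReal_mul, hindep, P]
    _ ≤ (stdGaussian E).real (openCone t u) :=
        measureReal_mono fun x hx ↦ mem_openCone_of_sqrt_lt_inner hu ht0 ht1 hx.1 hx.2

end Gaussian

section Cap

/-- The factor in the Gaussian lower bound for spherical caps. Each of the two losses, truncating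
the norm and shifting the Gaussian tail by one, costs a factor `r` in the exponent. -/
noncomputable def capConst (r : ℝ) : ℝ :=
  (1 - r⁻¹) * ((√(2 * π))⁻¹ * exp (-(1 - r⁻¹)⁻¹ / 2))

lemma capConst_pos {r : ℝ} (hr : 1 < r) : 0 < capConst r := by
  have : 0 < 1 - r⁻¹ := sub_pos.mpr (inv_lt_one_of_one_lt₀ hr)
  unfold capConst
  positivity

lemma add_one_sq_le {r : ℝ} (hr : 1 < r) (a : ℝ) : (a + 1) ^ 2 ≤ r * a ^ 2 + (1 - r⁻¹)⁻¹ := by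
  have hr' : 0 < r - 1 := sub_pos.mpr hr
  have hgap : r * a ^ 2 + (1 - r⁻¹)⁻¹ - (a + 1) ^ 2 = ((r - 1) * a - 1) ^ 2 / (r - 1) := by
    have : r ≠ 0 := by positivity
    field_simp
    ring
  have : 0 ≤ ((r - 1) * a - 1) ^ 2 / (r - 1) := by positivity
  linarith

lemma exp_le_gaussianPDFReal_add_one {r : ℝ} (hr : 1 < r) (a : ℝ) :
    (√(2 * π))⁻¹ * exp (-(1 - r⁻¹)⁻¹ / 2) * exp (-(r * a ^ 2) / 2) ≤
      gaussianPDFReal 0 1 (a + 1) := by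
  rw [mul_assoc, ← exp_add, gaussianPDFReal, NNReal.coe_one, mul_one, sub_zero, mul_one]
  gcongr
  linarith [add_one_sq_le hr a]

variable {E : Type*} [NormedAddCommGroup E] [InnerProductSpace ℝ E] [FiniteDimensional ℝ E]
  [MeasurableSpace E] [BorelSpace E]

lemma capConst_mul_exp_le_stdGaussian_openCone {u : E} (hu : ‖u‖ = 1) {r t : ℝ} (hr : 1 < r)
    (ht0 : 0 ≤ t) (ht1 : t < 1) :
    capConst r * exp (-(r ^ 2 * finrank ℝ E * (t ^ 2 / (1 - t ^ 2))) / 2) ≤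
      (stdGaussian E).real (openCone t u) := by
  have : Nontrivial E := ⟨u, 0, ne_zero_of_norm_ne_zero (hu.trans_ne one_ne_zero)⟩
  have hd : (0 : ℝ) < finrank ℝ E := mod_cast finrank_pos
  have ht : 0 < 1 - t ^ 2 := by nlinarith
  set M := r * finrank ℝ E
  set a := √(t ^ 2 / (1 - t ^ 2) * M)
  have ha : r * a ^ 2 = r ^ 2 * finrank ℝ E * (t ^ 2 / (1 - t ^ 2)) := by
    rw [sq_sqrt (by positivity)]
    ring
  have hM : 1 - finrank ℝ E / M = 1 - r⁻¹ := by
    rw [div_mul_cancel_right₀ hd.ne']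
  have hr' : 0 < 1 - r⁻¹ := sub_pos.mpr (inv_lt_one_of_one_lt₀ hr)
  calc capConst r * exp (-(r ^ 2 * finrank ℝ E * (t ^ 2 / (1 - t ^ 2))) / 2)
      = (√(2 * π))⁻¹ * exp (-(1 - r⁻¹)⁻¹ / 2) * exp (-(r * a ^ 2) / 2) *
          (1 - finrank ℝ E / M) := by
        rw [ha, hM, capConst]
        ring
    _ ≤ gaussianPDFReal 0 1 (a + 1) * (1 - finrank ℝ E / M) := by
        rw [hM]
        gcongr
        exact exp_le_gaussianPDFReal_add_one hr a
    _ ≤ (gaussianReal 0 1).real (Set.Ioi a) * (1 - finrank ℝ E / M) := by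
        rw [hM]
        gcongr
        exact gaussianPDFReal_add_one_le_measureReal_Ioi one_ne_zero (sqrt_nonneg _)
    _ ≤ (stdGaussian E).real (openCone t u) :=
        gaussianReal_Ioi_mul_le_stdGaussian_openCone hu ht0 ht1 (by positivity)

lemma IsUniformOnUnitSphere.stdGaussian_openCone_le {μ : Measure E}
    (hμ : IsUniformOnUnitSphere μ) {u : E} (hu : ‖u‖ = 1) (t : ℝ) :
    stdGaussian E (openCone t u) ≤ μ {x | t ≤ ⟪u, x⟫_ℝ} := by
  have := hμ.toIsProbabilityMeasure
  have hu0 : u ≠ 0 := ne_zero_of_norm_ne_zero (hu.trans_ne one_ne_zero)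
  calc stdGaussian E (openCone t u)
      = μ (openCone t u) * stdGaussian E {0}ᶜ := by
        rw [← measure_openCone_mul_comm hμ.map_linearIsometryEquiv (fun T ↦ stdGaussian_map T) t
          hu0, hμ.measure_compl_zero, mul_one]
    _ ≤ μ (openCone t u) := mul_le_of_le_one_right' prob_le_one
    _ ≤ μ {x | t ≤ ⟪u, x⟫_ℝ} := by
        refine measure_mono_ae ?_
        filter_upwards [hμ.ae_norm_eq_one] with x hx (hcone : t * (‖u‖ * ‖x‖) < ⟪u, x⟫_ℝ)
        rw [hu, hx, one_mul, mul_one] at hcone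
        exact hcone.le

theorem IsUniformOnUnitSphere.capConst_mul_exp_le_measureReal_cap {μ : Measure E}
    (hμ : IsUniformOnUnitSphere μ) {u : E} (hu : ‖u‖ = 1) {r t : ℝ} (hr : 1 < r)
    (ht0 : 0 ≤ t) (ht1 : t < 1) :
    capConst r * exp (-(r ^ 2 * finrank ℝ E * (t ^ 2 / (1 - t ^ 2))) / 2) ≤
      μ.real {x | t ≤ ⟪u, x⟫_ℝ} := by
  have := hμ.toIsProbabilityMeasure
  exact (capConst_mul_exp_le_stdGaussian_openCone hu hr ht0 ht1).trans
    (ENNReal.toReal_mono (measure_ne_top μ _) (hμ.stdGaussian_openCone_le hu t))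

end Cap

section Asymptotics

lemma tendsto_mul_log_div_natCast_atTop (γ : ℝ) :
    Tendsto (fun n : ℕ ↦ γ * log n / n) atTop (𝓝 0) := by
  simpa [Function.comp_def, mul_div_assoc] using
    (isLittleO_log_id_atTop.tendsto_div_nhds_zero.comp tendsto_natCast_atTop_atTop).const_mul γ

-- The finitely many `n` with `n ≤ γ * log n`, where the left side is meaningless, only affect `B`.
lemma exists_forall_mul_div_one_sub_le_mul_add {γ α β : ℝ} (hγ : 0 ≤ γ) (hαβ : α < β) :
    ∃ B, ∀ n : ℕ, α * (γ * log n / (1 - γ * log n / n)) ≤ β * (γ * log n) + B := by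
  have hlim : Tendsto (fun n : ℕ ↦ α / (1 - γ * log n / n)) atTop (𝓝 α) := by
    simpa [Pi.div_def] using (tendsto_const_nhds (x := α)).div
      ((tendsto_mul_log_div_natCast_atTop γ).const_sub 1) (by simp)
  have hev : ∀ᶠ n : ℕ in atTop,
      α * (γ * log n / (1 - γ * log n / n)) - β * (γ * log n) ≤ 0 := by
    filter_upwards [hlim.eventually_le_const hαβ] with n hn
    rw [sub_nonpos, mul_div_left_comm, mul_comm]
    gcongr
  obtain ⟨B, hB⟩ := (isBoundedUnder_of_eventually_le hev).bddAbove_range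
  exact ⟨B, fun n ↦ by linarith [hB (Set.mem_range_self n)]⟩

lemma exists_one_lt_sq_mul_lt {α β : ℝ} (hαβ : α < β) : ∃ r, 1 < r ∧ r ^ 2 * α < β := by
  have hcont : Continuous fun r : ℝ ↦ r ^ 2 * α := by fun_prop
  have hnear : ∀ᶠ r : ℝ in 𝓝[>] 1, r ^ 2 * α < β :=
    (hcont.tendsto' 1 α (by simp)).mono_left nhdsWithin_le_nhds |>.eventually_lt_const hαβ
  exact ((eventually_mem_nhdsWithin (a := 1) (s := Set.Ioi 1)).and hnear).exists

end Asymptotics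

theorem stmt_2_general {γ κ k : ℝ} (hγ : 0 ≤ γ) (hκ : k / 2 < κ) :
    ∃ c : ℝ, 0 < c ∧ ∀ n : ℕ, γ * log n < n →
      ∀ (E : Type*) [NormedAddCommGroup E] [InnerProductSpace ℝ E] [FiniteDimensional ℝ E]
        [MeasurableSpace E] [BorelSpace E] (μ : Measure E), IsUniformOnUnitSphere μ →
        finrank ℝ E ≤ k * n → ∀ u : E, ‖u‖ = 1 →
          ENNReal.ofReal (c / (n : ℝ) ^ (κ * γ)) ≤ μ {x | √(γ * log n / n) ≤ ⟪u, x⟫_ℝ} := by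
  obtain ⟨r, hr, hrκ⟩ := exists_one_lt_sq_mul_lt hκ
  obtain ⟨B, hB⟩ := exists_forall_mul_div_one_sub_le_mul_add hγ hrκ
  have hC := capConst_pos hr
  refine ⟨capConst r * exp (-B), by positivity, fun n hn E _ _ _ _ _ μ hμ hdim u hu ↦ ?_⟩
  have hw : 0 ≤ γ * log n := mul_nonneg hγ (log_natCast_nonneg n)
  have hn0 : (0 : ℝ) < n := hw.trans_lt hn
  have hw1 : γ * log n / n < 1 := (div_lt_one hn0).mpr hn
  set t := √(γ * log n / n) with ht
  have ht2 : t ^ 2 = γ * log n / n := sq_sqrt (by positivity)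
  have ht1 : t < 1 := by rwa [ht, sqrt_lt' one_pos, one_pow]
  have hexponent : r ^ 2 * finrank ℝ E * (t ^ 2 / (1 - t ^ 2)) / 2 ≤ κ * (γ * log n) + B := by
    have : 0 < 1 - γ * log n / n := sub_pos.mpr hw1
    calc r ^ 2 * finrank ℝ E * (t ^ 2 / (1 - t ^ 2)) / 2
        ≤ r ^ 2 * (k * n) * (γ * log n / n / (1 - γ * log n / n)) / 2 := by rw [ht2]; gcongr
      _ = r ^ 2 * (k / 2) * (γ * log n / (1 - γ * log n / n)) := by field_simp
      _ ≤ κ * (γ * log n) + B := hB n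
  refine ENNReal.ofReal_le_of_le_toReal ?_
  calc capConst r * exp (-B) / (n : ℝ) ^ (κ * γ)
      = capConst r * exp (-(κ * (γ * log n) + B)) := by
        rw [rpow_def_of_pos hn0, mul_div_assoc, ← exp_sub]
        ring_nf
    _ ≤ capConst r * exp (-(r ^ 2 * finrank ℝ E * (t ^ 2 / (1 - t ^ 2))) / 2) := by
        gcongr
        linarith
    _ ≤ μ.real {x | t ≤ ⟪u, x⟫_ℝ} :=
        hμ.capConst_mul_exp_le_measureReal_cap hu hr (sqrt_nonneg _) ht1

lemma const_mul_sqrt_log_two_div_le {c x : ℝ} (hc : 0 ≤ c) (hx : 0 ≤ x) {n : ℕ} (hn : 2 ≤ n) :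
    c * √(log 2) / (x * √(log n)) ≤ c / x := by
  have hlog : 0 < √(log n) := sqrt_pos.mpr (log_pos (mod_cast hn))
  rw [← mul_div_mul_right c x hlog.ne']
  gcongr
  exact mod_cast hn

/-- for every `γ > 0` and `δ > 0` there is `c(γ,δ) > 0` such that for every
`n ≥ 2` with `γ·ln n < n`, a uniform random point `ξ` of the unit sphere
`S^{4n−1} ⊂ ℝ^{4n}` (the unique rotation-invariant probability measure on the sphere)
satisfies `Prob{ξ₁ ≥ √(γ ln n / n)} ≥ c(γ,δ) / (n^{(2+δ+δ²/2)γ} √(ln n))`. -/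
theorem stmt_2 (γ δ : ℝ) (hγ : 0 < γ) (hδ : 0 < δ) :
    ∃ c : ℝ, 0 < c ∧
      ∀ n : ℕ, ∀ _hn : 2 ≤ n, ∀ _hγn : γ * Real.log n < n,
        ∀ μ : Measure (EuclideanSpace ℝ (Fin (4 * n))),
          IsProbabilityMeasure μ →
          μ (Metric.sphere (0 : EuclideanSpace ℝ (Fin (4 * n))) 1) = 1 →
          (∀ T : EuclideanSpace ℝ (Fin (4 * n)) ≃ₗᵢ[ℝ] EuclideanSpace ℝ (Fin (4 * n)),
            μ.map (fun x => T x) = μ) →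
          ENNReal.ofReal (c / ((n : ℝ) ^ ((2 + δ + δ ^ 2 / 2) * γ) * Real.sqrt (Real.log n))) ≤
            μ {x | Real.sqrt (γ * Real.log n / n) ≤ x ⟨0, by omega⟩} := by
  obtain ⟨c, hc, hcap⟩ := stmt_2_general (k := 4) (κ := 2 + δ + δ ^ 2 / 2) hγ.le
    (by linarith [sq_nonneg δ])
  refine ⟨c * √(log 2), by positivity, fun n hn hγn μ hμ hsphere hinv ↦ ?_⟩
  have hbound := hcap n hγn _ μ ⟨hμ, hsphere, hinv⟩ (by simp)
    (EuclideanSpace.single ⟨0, by omega⟩ 1) (by simp)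
  simp only [EuclideanSpace.inner_single_left, map_one, one_mul] at hbound
  exact (ENNReal.ofReal_le_ofReal
    (const_mul_sqrt_log_two_div_le hc.le (by positivity) hn)).trans hbound
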